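/- arXiv:1102.4371 — 2 statements merged into one kernel-verified Lean document; each statement's English description precedes it below -/
import Mathlib

section
/- For every integer m ≥ 1, every real λ ≥ 0 and every real x ≥ 0, G_{m,λ}(x) − G_{m+2,λ}(x) = 2 g_{m+2,λ}(x). -/
/-!
The chi-square density `f_m` is the gamma density `γ_a` of shape `a = m / 2` and rate `r = 1 / 2`.
On `ℝ \ {0}` gamma densities satisfy `γ_{a+1}' = r (γ_a - γ_{a+1})`, and `γ_{a+1}` is continuous
with `γ_{a+1}(0) = 0`, so `∫_0^x γ_a - ∫_0^x γ_{a+1} = γ_{a+1}(x) / r`. Raising the degrees of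
freedom by `2` shifts every shape of the Poisson mixture by `1`, hence the theorem is this identity
summed against the Poisson weights. The mixture may be integrated term by term because every gamma
density has integral `1` and the weights are absolutely summable.
-/

/-- The chi-square density with `m` degrees of freedom:
`f_m(x) = x^(m/2-1) e^(-x/2) / (2^(m/2) Γ(m/2))` for `x > 0`, and `0` otherwise. -/
noncomputable def chisqPDF (m : ℕ) (x : ℝ) : ℝ :=
  if 0 < x then
    x ^ ((m : ℝ) / 2 - 1) * Real.exp (-x / 2) /
      (2 ^ ((m : ℝ) / 2) * Real.Gamma ((m : ℝ) / 2))
  else 0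

/-- The noncentral chi-square density with `m` degrees of freedom and
noncentrality parameter `lam`:
`g_{m,λ}(x) = Σ_{j=0}^∞ [e^{-λ/2} (λ/2)^j / j!] f_{m+2j}(x)`. -/
noncomputable def ncChisqPDF (m : ℕ) (lam x : ℝ) : ℝ :=
  ∑' j : ℕ, Real.exp (-lam / 2) * (lam / 2) ^ j / (Nat.factorial j : ℝ) *
    chisqPDF (m + 2 * j) x

/-- The noncentral chi-square distribution function
`G_{m,λ}(x) = ∫_0^x g_{m,λ}(u) du`. -/
noncomputable def ncChisqCDF (m : ℕ) (lam x : ℝ) : ℝ :=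
  ∫ u in (0 : ℝ)..x, ncChisqPDF m lam u

open MeasureTheory ProbabilityTheory

section Integral

variable {α ι E : Type*} [MeasurableSpace α] [Countable ι] [NormedAddCommGroup E]
  [NormedSpace ℝ E] {μ : Measure α}

theorem hasSum_integral_smul_of_integral_norm_le {w : ι → ℝ} {f : ι → α → E} {C : ℝ}
    (hw : Summable w) (hf : ∀ i, Integrable (f i) μ) (hC : ∀ i, ∫ x, ‖f i x‖ ∂μ ≤ C) :
    HasSum (fun i ↦ w i • ∫ x, f i x ∂μ) (∫ x, ∑' i, w i • f i x ∂μ) := by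
  have norm_term (i : ι) : ∫ x, ‖w i • f i x‖ ∂μ = ‖w i‖ * ∫ x, ‖f i x‖ ∂μ := by
    simp only [norm_smul, integral_const_mul]
  have summable_norm : Summable fun i ↦ ∫ x, ‖w i • f i x‖ ∂μ := by
    refine (hw.norm.mul_right C).of_nonneg_of_le (fun i ↦ by positivity) fun i ↦ ?_
    rw [norm_term]
    gcongr
    exact hC i
  simpa only [Pi.smul_apply, integral_smul] using
    hasSum_integral_of_summable_integral_norm (fun i ↦ (hf i).smul (w i)) summable_norm

end Integral

section GammaPDF

variable {a r x : ℝ}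

theorem continuous_gammaPDFReal (ha : 1 < a) (r : ℝ) : Continuous (gammaPDFReal a r) := by
  have continuous_rpow : Continuous fun x : ℝ ↦ x ^ (a - 1) :=
    Real.continuous_rpow_const (by linarith)
  refine Continuous.if_le (by fun_prop) continuous_const continuous_const continuous_id ?_
  rintro _ rfl
  simp [Real.zero_rpow (sub_pos.2 ha).ne']

theorem integrable_gammaPDFReal (ha : 0 < a) (hr : 0 < r) : Integrable (gammaPDFReal a r) := by
  refine (lintegral_ofReal_ne_top_iff_integrable (by fun_prop)
    (.of_forall (gammaPDFReal_nonneg ha hr))).1 ?_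
  exact (lintegral_gammaPDF_eq_one ha hr).trans_ne ENNReal.one_ne_top

theorem integral_gammaPDFReal (ha : 0 < a) (hr : 0 < r) : ∫ x, gammaPDFReal a r x = 1 := by
  rw [integral_eq_lintegral_of_nonneg_ae (.of_forall (gammaPDFReal_nonneg ha hr)) (by fun_prop)]
  exact congrArg ENNReal.toReal (lintegral_gammaPDF_eq_one ha hr)

theorem hasDerivAt_gammaPDFReal_add_one (ha : a ≠ 0) (hr : r ≠ 0) (hx : x ≠ 0) :
    HasDerivAt (gammaPDFReal (a + 1) r)
      (r * (gammaPDFReal a r x - gammaPDFReal (a + 1) r x)) x := by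
  rcases hx.lt_or_gt with hneg | hpos
  · have eventually_zero : gammaPDFReal (a + 1) r =ᶠ[nhds x] fun _ ↦ 0 := by
      filter_upwards [gt_mem_nhds hneg] with y hy using if_neg hy.not_ge
    simpa only [gammaPDFReal, if_neg hneg.not_ge, sub_zero, mul_zero] using
      (hasDerivAt_const x (0 : ℝ)).congr_of_eventuallyEq eventually_zero
  · have hasDerivAt_exp : HasDerivAt (fun y ↦ Real.exp (-(r * y))) _ x :=
      ((hasDerivAt_id x).const_mul r).neg.exp
    have hasDerivAt_formula := ((Real.hasDerivAt_rpow_const (p := a) (.inl hx)).const_mul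
      (r ^ (a + 1) / Real.Gamma (a + 1))).mul hasDerivAt_exp
    refine (hasDerivAt_formula.congr_of_eventuallyEq ?_).congr_deriv ?_
    · filter_upwards [lt_mem_nhds hpos] with y hy
      simp [gammaPDFReal, hy.le]
    · simp only [gammaPDFReal, if_pos hpos.le, Real.Gamma_add_one ha, Real.rpow_add_one hr,
        add_sub_cancel_right, id, mul_one, Pi.neg_apply]
      field_simp
      ring

theorem integral_gammaPDFReal_sub_integral_gammaPDFReal_add_one (ha : 0 < a) (hr : 0 < r)
    (x : ℝ) :
    (∫ u in (0 : ℝ)..x, gammaPDFReal a r u) - ∫ u in (0 : ℝ)..x, gammaPDFReal (a + 1) r u =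
      r⁻¹ * gammaPDFReal (a + 1) r x := by
  have integrable_a := (integrable_gammaPDFReal ha hr).intervalIntegrable (a := 0) (b := x)
  have integrable_add_one :=
    (integrable_gammaPDFReal (add_pos ha one_pos) hr).intervalIntegrable (a := 0) (b := x)
  have gammaPDFReal_zero : gammaPDFReal (a + 1) r 0 = 0 := by simp [gammaPDFReal, ha.ne']
  have ftc := integral_eq_of_hasDerivAt_off_countable (gammaPDFReal (a + 1) r) _
    (Set.countable_singleton (0 : ℝ))
    (continuous_gammaPDFReal (lt_add_of_pos_left 1 ha) r).continuousOn
    (fun u hu ↦ hasDerivAt_gammaPDFReal_add_one ha.ne' hr.ne' hu.2)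
    ((integrable_a.sub integrable_add_one).const_mul r)
  rw [intervalIntegral.integral_const_mul,
    intervalIntegral.integral_sub integrable_a integrable_add_one, gammaPDFReal_zero,
    sub_zero] at ftc
  rw [← ftc, inv_mul_cancel_left₀ hr.ne']

end GammaPDF

section GammaMixture

/-- The mixture `∑ⱼ wⱼ γ_{a+j,r}` of gamma densities whose shapes increase in unit steps. The
weights may be arbitrary reals, not only probabilities. -/
noncomputable def gammaMixturePDF (w : ℕ → ℝ) (a r x : ℝ) : ℝ :=
  ∑' j : ℕ, w j * gammaPDFReal (a + j) r x

variable {w : ℕ → ℝ} {a r : ℝ}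

theorem hasSum_integral_gammaMixturePDF (hw : Summable w) (ha : 0 < a) (hr : 0 < r) (x y : ℝ) :
    HasSum (fun j : ℕ ↦ w j * ∫ u in x..y, gammaPDFReal (a + j) r u)
      (∫ u in x..y, gammaMixturePDF w a r u) := by
  have shape_pos (j : ℕ) : 0 < a + j := by positivity
  have integrable (j : ℕ) := integrable_gammaPDFReal (shape_pos j) hr
  have integral_norm_le_one (j : ℕ) :
      ∫ u in Set.uIoc x y, ‖gammaPDFReal (a + j) r u‖ ≤ 1 := by
    refine (setIntegral_le_integral (integrable j).norm
      (.of_forall fun u ↦ norm_nonneg _)).trans_eq ?_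
    simp only [Real.norm_of_nonneg (gammaPDFReal_nonneg (shape_pos j) hr _)]
    exact integral_gammaPDFReal (shape_pos j) hr
  have hasSum_uIoc := hasSum_integral_smul_of_integral_norm_le hw
    (fun j ↦ (integrable j).integrableOn) integral_norm_le_one
  simp only [intervalIntegral.intervalIntegral_eq_integral_uIoc, gammaMixturePDF, smul_eq_mul,
    mul_left_comm (w _)] at hasSum_uIoc ⊢
  exact hasSum_uIoc.mul_left _

theorem integral_gammaMixturePDF_sub_integral_gammaMixturePDF_add_one (hw : Summable w)
    (ha : 0 < a) (hr : 0 < r) (x : ℝ) :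
    (∫ u in (0 : ℝ)..x, gammaMixturePDF w a r u) -
        ∫ u in (0 : ℝ)..x, gammaMixturePDF w (a + 1) r u =
      r⁻¹ * gammaMixturePDF w (a + 1) r x := by
  have hasSum_sub := (hasSum_integral_gammaMixturePDF hw ha hr 0 x).sub
    (hasSum_integral_gammaMixturePDF hw (add_pos ha one_pos) hr 0 x)
  rw [← hasSum_sub.tsum_eq, gammaMixturePDF, ← tsum_mul_left]
  refine tsum_congr fun j ↦ ?_
  have shape_pos : 0 < a + j := by positivity
  rw [← mul_sub, add_right_comm a 1,
    integral_gammaPDFReal_sub_integral_gammaPDFReal_add_one shape_pos hr, mul_left_comm]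

end GammaMixture

section Chisq

/-- The weight `e^{-λ/2} (λ/2)^j / j!` of the `j`-th component of the noncentral chi-square
density: the Poisson probability of `j` at rate `λ/2` when `λ ≥ 0`. -/
noncomputable def ncChisqWeight (lam : ℝ) (j : ℕ) : ℝ :=
  Real.exp (-lam / 2) * (lam / 2) ^ j / (Nat.factorial j : ℝ)

theorem summable_ncChisqWeight (lam : ℝ) : Summable (ncChisqWeight lam) := by
  refine ((Real.summable_pow_div_factorial (lam / 2)).mul_left (Real.exp (-lam / 2))).congr
    fun j ↦ ?_
  rw [ncChisqWeight, mul_div_assoc]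

/- The formulas disagree at `x = 0` when `m = 2`: `chisqPDF 2 0 = 0`, whereas
`gammaPDFReal 1 (1 / 2) 0 = 1 / 2`. For `m ≤ 1` they agree there by the convention
`0 ^ (m / 2 - 1) = 0` for negative exponents. -/
theorem chisqPDF_eq_gammaPDFReal {m : ℕ} {x : ℝ} (h : m ≠ 2 ∨ x ≠ 0) :
    chisqPDF m x = gammaPDFReal (m / 2) (1 / 2) x := by
  rcases lt_trichotomy x 0 with hneg | rfl | hpos
  · rw [chisqPDF, gammaPDFReal, if_neg hneg.not_gt, if_neg hneg.not_ge]
  · have exponent_ne_zero : (m : ℝ) / 2 - 1 ≠ 0 := by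
      have : (m : ℝ) ≠ 2 := by exact_mod_cast h.resolve_right (not_not_intro rfl)
      contrapose! this
      linarith
    simp [chisqPDF, gammaPDFReal, Real.zero_rpow exponent_ne_zero]
  · rw [chisqPDF, gammaPDFReal, if_pos hpos, if_pos hpos.le, one_div, Real.inv_rpow zero_le_two,
      neg_div, div_eq_inv_mul x]
    field_simp

theorem ncChisqPDF_eq_gammaMixturePDF {m : ℕ} {x : ℝ} (h : 2 < m ∨ x ≠ 0) (lam : ℝ) :
    ncChisqPDF m lam x = gammaMixturePDF (ncChisqWeight lam) (m / 2) (1 / 2) x := by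
  refine tsum_congr fun j ↦ ?_
  have shape_eq : ((m + 2 * j : ℕ) : ℝ) / 2 = m / 2 + j := by push_cast; ring
  rw [chisqPDF_eq_gammaPDFReal (h.imp_left (by lia)), shape_eq, ncChisqWeight]

theorem ncChisqCDF_eq_integral_gammaMixturePDF (m : ℕ) (lam x : ℝ) :
    ncChisqCDF m lam x =
      ∫ u in (0 : ℝ)..x, gammaMixturePDF (ncChisqWeight lam) (m / 2) (1 / 2) u := by
  refine intervalIntegral.integral_congr_ae ?_
  filter_upwards [volume.ae_ne 0] with u hu _
  exact ncChisqPDF_eq_gammaMixturePDF (.inr hu) lam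

theorem ncChisqCDF_sub_ncChisqCDF_add_two_general {m : ℕ} (hm : 1 ≤ m) (lam x : ℝ) :
    ncChisqCDF m lam x - ncChisqCDF (m + 2) lam x = 2 * ncChisqPDF (m + 2) lam x := by
  have shape_pos : 0 < (m : ℝ) / 2 := by positivity
  have shape_add_two : ((m + 2 : ℕ) : ℝ) / 2 = m / 2 + 1 := by push_cast; ring
  rw [ncChisqPDF_eq_gammaMixturePDF (.inl (by lia)), ncChisqCDF_eq_integral_gammaMixturePDF,
    ncChisqCDF_eq_integral_gammaMixturePDF, shape_add_two,
    integral_gammaMixturePDF_sub_integral_gammaMixturePDF_add_one (summable_ncChisqWeight lam)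
      shape_pos one_half_pos, one_div, inv_inv]

end Chisq

/-- For every integer `m ≥ 1`, every real `λ ≥ 0` and every real `x ≥ 0`,
`G_{m,λ}(x) - G_{m+2,λ}(x) = 2 g_{m+2,λ}(x)`. -/
theorem ncChisqCDF_sub_ncChisqCDF_add_two (m : ℕ) (hm : 1 ≤ m) (lam : ℝ)
    (hlam : 0 ≤ lam) (x : ℝ) (hx : 0 ≤ x) :
    ncChisqCDF m lam x - ncChisqCDF (m + 2) lam x = 2 * ncChisqPDF (m + 2) lam x :=
  ncChisqCDF_sub_ncChisqCDF_add_two_general hm lam x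
end

section
/- The function φ ↦ I₁(φ) is differentiable, and for every φ > 0 it satisfies I₁'(φ) = I₀(φ) − I₁(φ)/φ. Consequently, the function a₂(φ) = −log I₀(φ) of the von Mises proper dispersion model satisfies a₂''(φ) = r(φ)² + r(φ)/φ − 1 for every φ > 0, where r(φ) = I₁(φ)/I₀(φ). -/
/-!
Differentiating under the integral sign and linearising `cos t * cos ((j + 1) t)` gives `I₀′ = I₁`
and `2 I_{j+1}′ = I_j + I_{j+2}`. The function `t ↦ e^{φ cos t} sin ((j + 1) t)` vanishes at both
endpoints of `[0, π]`, so its derivative integrates to zero there, which is the recurrence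
`2 (j + 1) I_{j+1} = φ (I_j - I_{j+2})`. Eliminating `I_{j+2}` yields
`I_{j+1}′ = I_j - (j + 1) I_{j+1} / φ`. At `j = 0` this turns the quotient rule for `r = I₁ / I₀`
into the Riccati equation `r′ = 1 - r / φ - r²`, and `a₂′ = -r`.
-/

open Real in
/-- The modified Bessel function of the first kind and integer order `j`:
`I_j(φ) = (1/π) ∫_0^π e^{φ cos t} cos(j t) dt`. -/
noncomputable def besselI (j : ℕ) (φ : ℝ) : ℝ :=
  (1 / π) * ∫ t in (0 : ℝ)..π, Real.exp (φ * Real.cos t) * Real.cos (j * t)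

open Function MeasureTheory Real Set

theorem hasDerivAt_intervalIntegral_of_continuous {𝕜 E : Type*} [RCLike 𝕜]
    [NormedAddCommGroup E] [NormedSpace ℝ E] [NormedSpace 𝕜 E] {μ : Measure ℝ}
    [IsLocallyFiniteMeasure μ] {F F' : 𝕜 → ℝ → E} (a b : ℝ) (hF : ∀ x, Continuous (F x))
    (hF' : Continuous (uncurry F')) (hderiv : ∀ x t, HasDerivAt (F · t) (F' x t) x) (x₀ : 𝕜) :
    HasDerivAt (fun x ↦ ∫ t in a..b, F x t ∂μ) (∫ t in a..b, F' x₀ t ∂μ) x₀ := by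
  obtain ⟨C, hC⟩ : ∃ C, ∀ p ∈ Metric.closedBall x₀ 1 ×ˢ uIcc a b, ‖uncurry F' p‖ ≤ C :=
    ((isCompact_closedBall x₀ 1).prod isCompact_uIcc).exists_bound_of_continuousOn
      hF'.continuousOn
  exact (intervalIntegral.hasDerivAt_integral_of_dominated_loc_of_deriv_le
    (Metric.closedBall_mem_nhds x₀ one_pos)
    (.of_forall fun x ↦ (hF x).aestronglyMeasurable)
    ((hF x₀).intervalIntegrable a b)
    (hF'.uncurry_left x₀).aestronglyMeasurable
    (.of_forall fun t ht x hx ↦ hC (x, t) ⟨hx, uIoc_subset_uIcc ht⟩)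
    intervalIntegrable_const
    (.of_forall fun t _ x _ ↦ hderiv x t)).2

theorem hasDerivAt_besselI (j : ℕ) (φ : ℝ) :
    HasDerivAt (besselI j)
      (1 / π * ∫ t in (0 : ℝ)..π, exp (φ * cos t) * (cos t * cos (j * t))) φ := by
  refine (hasDerivAt_intervalIntegral_of_continuous 0 π (fun x ↦ by fun_prop)
    (F' := fun x t ↦ exp (x * cos t) * (cos t * cos (j * t)))
    (by fun_prop) (fun x t ↦ ?_) φ).const_mul (1 / π)
  simpa only [mul_assoc] using (hasDerivAt_mul_const (cos t)).exp.mul_const (cos (j * t))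

theorem intervalIntegrable_exp_mul_cos_mul_cos (j : ℕ) (φ a b : ℝ) :
    IntervalIntegrable (fun t ↦ exp (φ * cos t) * cos (j * t)) volume a b :=
  Continuous.intervalIntegrable (by fun_prop) a b

theorem hasDerivAt_besselI_zero (φ : ℝ) : HasDerivAt (besselI 0) (besselI 1 φ) φ := by
  simpa [besselI] using hasDerivAt_besselI 0 φ

theorem hasDerivAt_besselI_succ (j : ℕ) (φ : ℝ) :
    HasDerivAt (besselI (j + 1)) ((besselI j φ + besselI (j + 2) φ) / 2) φ := by
  refine (hasDerivAt_besselI (j + 1) φ).congr_deriv ?_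
  have hcos (t : ℝ) : exp (φ * cos t) * (cos t * cos ((j + 1 : ℕ) * t)) =
      (exp (φ * cos t) * cos (j * t) + exp (φ * cos t) * cos ((j + 2 : ℕ) * t)) / 2 := by
    have hprod : 2 * cos ((j + 1 : ℕ) * t) * cos t = cos (j * t) + cos ((j + 2 : ℕ) * t) := by
      convert two_mul_cos_mul_cos ((j + 1 : ℕ) * t) t using 3 <;> push_cast <;> ring
    linear_combination exp (φ * cos t) / 2 * hprod
  simp only [hcos, intervalIntegral.integral_div]
  rw [intervalIntegral.integral_add (intervalIntegrable_exp_mul_cos_mul_cos j φ 0 π)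
    (intervalIntegrable_exp_mul_cos_mul_cos (j + 2) φ 0 π)]
  simp only [besselI]
  ring

theorem differentiable_besselI (j : ℕ) : Differentiable ℝ (besselI j) :=
  fun φ ↦ (hasDerivAt_besselI j φ).differentiableAt

theorem hasDerivAt_exp_mul_cos_mul_sin (j : ℕ) (φ t : ℝ) :
    HasDerivAt (fun t ↦ exp (φ * cos t) * sin ((j + 1 : ℕ) * t))
      ((j + 1) * (exp (φ * cos t) * cos ((j + 1 : ℕ) * t)) -
        φ / 2 * (exp (φ * cos t) * cos (j * t) - exp (φ * cos t) * cos ((j + 2 : ℕ) * t))) t := by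
  have hexp : HasDerivAt (fun t ↦ exp (φ * cos t)) (exp (φ * cos t) * (φ * -sin t)) t :=
    ((hasDerivAt_cos t).const_mul φ).exp
  have hsin : HasDerivAt (fun t ↦ sin ((j + 1 : ℕ) * t))
      (cos ((j + 1 : ℕ) * t) * (j + 1 : ℕ)) t :=
    (hasDerivAt_const_mul ((j + 1 : ℕ) : ℝ)).sin
  refine (hexp.mul hsin).congr_deriv ?_
  have hprod : 2 * sin ((j + 1 : ℕ) * t) * sin t = cos (j * t) - cos ((j + 2 : ℕ) * t) := by
    convert two_mul_sin_mul_sin ((j + 1 : ℕ) * t) t using 3 <;> push_cast <;> ring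
  push_cast at hprod ⊢
  linear_combination -(φ / 2 * exp (φ * cos t)) * hprod

theorem two_mul_succ_mul_besselI_succ (j : ℕ) (φ : ℝ) :
    2 * (j + 1) * besselI (j + 1) φ = φ * (besselI j φ - besselI (j + 2) φ) := by
  have hint (k : ℕ) := intervalIntegrable_exp_mul_cos_mul_cos k φ 0 π
  have hdiff := (hint j).sub (hint (j + 2))
  have h := intervalIntegral.integral_eq_sub_of_hasDerivAt
    (fun t _ ↦ hasDerivAt_exp_mul_cos_mul_sin j φ t)
    (((hint (j + 1)).const_mul (j + 1 : ℝ)).sub (hdiff.const_mul (φ / 2)))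
  rw [intervalIntegral.integral_sub ((hint (j + 1)).const_mul _) (hdiff.const_mul _),
    intervalIntegral.integral_const_mul, intervalIntegral.integral_const_mul,
    intervalIntegral.integral_sub (hint j) (hint (j + 2)), sin_nat_mul_pi, mul_zero, mul_zero,
    sin_zero, mul_zero, sub_zero] at h
  simp only [besselI]
  linear_combination 2 / π * h

theorem hasDerivAt_besselI_succ_of_ne_zero (j : ℕ) {φ : ℝ} (hφ : φ ≠ 0) :
    HasDerivAt (besselI (j + 1)) (besselI j φ - (j + 1) * besselI (j + 1) φ / φ) φ := by
  refine (hasDerivAt_besselI_succ j φ).congr_deriv ?_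
  field_simp
  linear_combination two_mul_succ_mul_besselI_succ j φ

theorem hasDerivAt_besselI_one {φ : ℝ} (hφ : φ ≠ 0) :
    HasDerivAt (besselI 1) (besselI 0 φ - besselI 1 φ / φ) φ := by
  simpa using hasDerivAt_besselI_succ_of_ne_zero 0 hφ

theorem besselI_zero_pos (φ : ℝ) : 0 < besselI 0 φ := by
  refine mul_pos (by positivity) (intervalIntegral.intervalIntegral_pos_of_pos
    (intervalIntegrable_exp_mul_cos_mul_cos 0 φ 0 π) (fun t ↦ ?_) pi_pos)
  simp [exp_pos]

theorem deriv_neg_log_besselI_zero :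
    deriv (fun φ ↦ -log (besselI 0 φ)) = fun φ ↦ -(besselI 1 φ / besselI 0 φ) :=
  funext fun φ ↦ ((hasDerivAt_besselI_zero φ).log (besselI_zero_pos φ).ne').neg.deriv

theorem hasDerivAt_besselI_one_div_besselI_zero {φ : ℝ} (hφ : φ ≠ 0) :
    HasDerivAt (fun x ↦ besselI 1 x / besselI 0 x)
      (1 - besselI 1 φ / besselI 0 φ / φ - (besselI 1 φ / besselI 0 φ) ^ 2) φ := by
  have h₀ : besselI 0 φ ≠ 0 := (besselI_zero_pos φ).ne'
  refine ((hasDerivAt_besselI_one hφ).div (hasDerivAt_besselI_zero φ) h₀).congr_deriv ?_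
  field_simp

theorem besselI_one_deriv_general {φ : ℝ} (hφ : φ ≠ 0) :
    Differentiable ℝ (besselI 1) ∧
    deriv (besselI 1) φ = besselI 0 φ - besselI 1 φ / φ ∧
    deriv (deriv (fun t : ℝ => -Real.log (besselI 0 t))) φ =
      (besselI 1 φ / besselI 0 φ) ^ 2 + (besselI 1 φ / besselI 0 φ) / φ - 1 := by
  refine ⟨differentiable_besselI 1, (hasDerivAt_besselI_one hφ).deriv, ?_⟩
  rw [deriv_neg_log_besselI_zero, (hasDerivAt_besselI_one_div_besselI_zero hφ).fun_neg.deriv]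
  ring

/-- `I₁` is differentiable and satisfies `I₁′(φ) = I₀(φ) - I₁(φ)/φ` for `φ > 0`.
Consequently, `a₂(φ) = -log I₀(φ)` of the von Mises proper dispersion model
satisfies `a₂″(φ) = r(φ)² + r(φ)/φ - 1` for every `φ > 0`, where
`r(φ) = I₁(φ)/I₀(φ)`. -/
theorem besselI_one_deriv (φ : ℝ) (hφ : 0 < φ) :
    Differentiable ℝ (besselI 1) ∧
    deriv (besselI 1) φ = besselI 0 φ - besselI 1 φ / φ ∧
    deriv (deriv (fun t : ℝ => -Real.log (besselI 0 t))) φ =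
      (besselI 1 φ / besselI 0 φ) ^ 2 + (besselI 1 φ / besselI 0 φ) / φ - 1 :=
  besselI_one_deriv_general hφ.ne'
end
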